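/- The vector π on {0,1,2}² given by π(i,i) = (p + a − pa)/(9p + 3a − 9pa) for every i, and π(i,j) = (p − pa)/(9p + 3a − 9pa) for every i ≠ j, has nonnegative entries, sums to 1, and is an invariant (stationary) distribution of the joint source–reconstruction chain M, i.e. πM = π. (This is eq. (57) of the paper with a = p_α·p_s.) -/

import Mathlib

/-!
Write `N` for the number of states. The symmetric source is `(1 - N p) I + p J` with `J` the
all-ones matrix, and up to normalization the claimed law is `a I + p (1 - a) J`, read as a
function of the pair (source state, reconstruction). One step of the joint chain sends a law `π`
to `a [z = y] (μ P) y + (1 - a) ∑ x, π (x, z) P x y`, where `μ` is the source marginal of `π`. For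
the claimed law `μ` is constant, hence fixed by `P`, and invariance reduces to comparing the
coefficients of `I` and `J`. No division is involved before the final normalization.
-/

open Finset Matrix

section CommRing

variable {ι R : Type*} [DecidableEq ι] [CommRing R]

/-- Transition matrix of the symmetric source on the states `ι`: every jump between distinct states
has probability `p`. -/
def symmetricSource (ι : Type*) [Fintype ι] [DecidableEq ι] (p : R) : Matrix ι ι R :=
  of fun i j => if i = j then 1 - (Fintype.card ι - 1) * p else p

/-- Transition matrix of the joint source–reconstruction chain, on pairs (source state,
reconstruction): the source moves by `P`, then the reconstruction is refreshed to the new source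
state with probability `a` and kept otherwise. -/
def jointKernel (P : Matrix ι ι R) (a : R) : Matrix (ι × ι) (ι × ι) R :=
  of fun s t =>
    P s.1 t.1 * (a * (if t.2 = t.1 then 1 else 0) + (1 - a) * (if t.2 = s.2 then 1 else 0))

/-- The stationary law of the joint chain over the symmetric source, before normalization. -/
def jointWeight (p a : R) (s : ι × ι) : R :=
  if s.1 = s.2 then p + a - p * a else p - p * a

/-- The total mass of `jointWeight`. -/
def jointMass (ι : Type*) [Fintype ι] (p a : R) : R :=
  Fintype.card ι * (a + Fintype.card ι * (p * (1 - a)))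

lemma jointWeight_mk (p a : R) (x z : ι) :
    jointWeight p a (x, z) = (if x = z then a else 0) + p * (1 - a) := by
  simp only [jointWeight]
  split_ifs <;> ring

variable [Fintype ι]

lemma symmetricSource_apply (p : R) (i j : ι) :
    symmetricSource ι p i j = (if i = j then 1 - Fintype.card ι * p else 0) + p := by
  simp only [symmetricSource, of_apply]
  split_ifs <;> ring

lemma sum_symmetricSource_left (p : R) (j : ι) : ∑ i, symmetricSource ι p i j = 1 := by
  simp [symmetricSource_apply, sum_add_distrib]

lemma sum_jointWeight_right (p a : R) (x : ι) :
    ∑ z, jointWeight p a (x, z) = a + Fintype.card ι * (p * (1 - a)) := by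
  simp [jointWeight_mk, sum_add_distrib]

lemma sum_jointWeight (p a : R) : ∑ s : ι × ι, jointWeight p a s = jointMass ι p a := by
  simp only [Fintype.sum_prod_type, sum_jointWeight_right, sum_const, card_univ, nsmul_eq_mul,
    jointMass]

lemma vecMul_jointKernel (P : Matrix ι ι R) (a : R) (π : ι × ι → R) (y z : ι) :
    (π ᵥ* jointKernel P a) (y, z) =
      (if z = y then a * ∑ x, (∑ w, π (x, w)) * P x y else 0) +
        (1 - a) * ∑ x, π (x, z) * P x y := by
  have sum_reconstruction (x : ι) :
      ∑ w, π (x, w) * jointKernel P a (x, w) (y, z) =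
        (if z = y then a * ((∑ w, π (x, w)) * P x y) else 0) + (1 - a) * (π (x, z) * P x y) := by
    simp only [jointKernel, of_apply, mul_add, sum_add_distrib]
    congr 1
    · rw [← sum_mul]
      split_ifs <;> ring
    · simp only [mul_ite, mul_one, mul_zero, sum_ite_eq, mem_univ, if_true]
      ring
  simp only [vecMul, dotProduct, Fintype.sum_prod_type, sum_reconstruction, sum_add_distrib]
  split_ifs <;> simp [mul_sum]

lemma sum_jointWeight_mul_symmetricSource (p a : R) (y z : ι) :
    ∑ x, jointWeight p a (x, z) * symmetricSource ι p x y =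
      a * symmetricSource ι p z y + p * (1 - a) := by
  simp [jointWeight_mk, add_mul, sum_add_distrib, ← mul_sum, sum_symmetricSource_left]

theorem jointWeight_vecMul_jointKernel (p a : R) :
    jointWeight p a ᵥ* jointKernel (symmetricSource ι p) a = jointWeight p a := by
  ext ⟨y, z⟩
  rw [vecMul_jointKernel, sum_jointWeight_mul_symmetricSource, jointWeight_mk]
  simp only [sum_jointWeight_right, ← mul_sum, sum_symmetricSource_left]
  simp only [symmetricSource_apply, eq_comm (a := y)]
  split_ifs <;> ring

end CommRing

section Field

variable {ι K : Type*} [Fintype ι] [DecidableEq ι] [Field K]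

/-- The vector of eq. (57) for a symmetric source with any finite number of states; it is `0` when
the total mass of `jointWeight` vanishes. -/
def jointStationaryLaw (p a : K) : ι × ι → K :=
  (jointMass ι p a)⁻¹ • jointWeight p a

lemma sum_jointStationaryLaw {p a : K} (hmass : jointMass ι p a ≠ 0) :
    ∑ s : ι × ι, jointStationaryLaw p a s = 1 := by
  simp only [jointStationaryLaw, Pi.smul_apply, smul_eq_mul, ← mul_sum, sum_jointWeight,
    inv_mul_cancel₀ hmass]

theorem jointStationaryLaw_vecMul_jointKernel (p a : K) :
    jointStationaryLaw p a ᵥ* jointKernel (symmetricSource ι p) a = jointStationaryLaw p a := by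
  rw [jointStationaryLaw, smul_vecMul, jointWeight_vecMul_jointKernel]

end Field

section LinearOrderedField

variable {ι K : Type*} [DecidableEq ι] [Field K] [LinearOrder K] [IsStrictOrderedRing K] {p a : K}

lemma jointWeight_nonneg (hp : 0 ≤ p) (ha : 0 ≤ a) (ha' : a ≤ 1) (s : ι × ι) :
    0 ≤ jointWeight p a s := by
  have hkeep : 0 ≤ p * (1 - a) := mul_nonneg hp (sub_nonneg.2 ha')
  rw [jointWeight_mk]
  split_ifs <;> linarith

lemma jointStationaryLaw_nonneg [Fintype ι] (hp : 0 ≤ p) (ha : 0 ≤ a) (ha' : a ≤ 1) (s : ι × ι) :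
    0 ≤ jointStationaryLaw p a s := by
  have hweight : ∀ s : ι × ι, 0 ≤ jointWeight p a s := jointWeight_nonneg hp ha ha'
  have hmass : 0 ≤ jointMass ι p a :=
    sum_jointWeight (ι := ι) p a ▸ sum_nonneg fun s _ => hweight s
  exact mul_nonneg (inv_nonneg.2 hmass) (hweight s)

theorem stmt_5_general [Fintype ι] (hp : 0 ≤ p) (ha : 0 ≤ a) (ha' : a ≤ 1)
    (hmass : jointMass ι p a ≠ 0) :
    jointStationaryLaw p a ∈ stdSimplex K (ι × ι) ∧
      jointStationaryLaw p a ᵥ* jointKernel (symmetricSource ι p) a = jointStationaryLaw p a :=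
  ⟨⟨jointStationaryLaw_nonneg hp ha ha', sum_jointStationaryLaw hmass⟩,
    jointStationaryLaw_vecMul_jointKernel p a⟩

end LinearOrderedField

/-- Eq. (57) of the paper: the stationary distribution of the joint source–reconstruction
chain for the three-state symmetric DTMC source under the randomized stationary policy. -/
theorem stmt_5 (p a : ℝ) (hp : 0 < p) (hp' : p ≤ 1 / 2) (ha : 0 ≤ a) (ha' : a ≤ 1)
    (hden : 0 < 9 * p + 3 * a - 9 * p * a)
    (P : Fin 3 → Fin 3 → ℝ)
    (hP : ∀ i j, P i j = if i = j then 1 - 2 * p else p)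
    (M : (Fin 3 × Fin 3) → (Fin 3 × Fin 3) → ℝ)
    (hM : ∀ s t, M s t =
      P s.1 t.1 * (a * (if t.2 = t.1 then 1 else 0) + (1 - a) * (if t.2 = s.2 then 1 else 0)))
    (pi : Fin 3 × Fin 3 → ℝ)
    (hpi : ∀ s : Fin 3 × Fin 3, pi s =
      if s.1 = s.2 then (p + a - p * a) / (9 * p + 3 * a - 9 * p * a)
      else (p - p * a) / (9 * p + 3 * a - 9 * p * a)) :
    (∀ s, 0 ≤ pi s) ∧ (∑ s : Fin 3 × Fin 3, pi s = 1) ∧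
      (∀ t, ∑ s : Fin 3 × Fin 3, pi s * M s t = pi t) := by
  have hmass : jointMass (Fin 3) p a = 9 * p + 3 * a - 9 * p * a := by
    simp only [jointMass, Fintype.card_fin, Nat.cast_ofNat]
    ring
  obtain rfl : P = symmetricSource (Fin 3) p := by
    ext i j
    rw [hP, symmetricSource, of_apply, Fintype.card_fin]
    norm_num
  obtain rfl : M = jointKernel (symmetricSource (Fin 3) p) a := funext₂ hM
  obtain rfl : pi = jointStationaryLaw p a := by
    ext s
    rw [hpi, jointStationaryLaw, Pi.smul_apply, smul_eq_mul, ← div_eq_inv_mul, hmass, jointWeight,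
      ite_div]
  obtain ⟨⟨hnonneg, hsum⟩, hinvariant⟩ :=
    stmt_5_general (ι := Fin 3) hp.le ha ha' (hmass ▸ hden.ne')
  exact ⟨hnonneg, hsum, congrFun hinvariant⟩
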